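/- Let x₀ ∈ 𝕋², r₀ > 0, M̄ > 1, and let 𝔟 ∈ C¹(𝕋²; ℝ) satisfy the bending condition. There exist c₀ > 0 and m̲ > 0 (depending on 𝔟, x₀, r₀), and T > 0 and κ > 0 (depending on 𝔟, x₀, r₀, M̄), such that for every speed of light c ≥ c₀ and every force F ∈ L^∞(0,T; W^{1,∞}(𝕋²×ℝ²; ℝ²)) with ‖F‖_{L^∞} ≤ κ, the relativistic characteristics (X̄, V̄) associated with the force v̂⊥𝔟(x) + F satisfy: for every x ∈ 𝕋² and every v ∈ ℝ² with m̲ ≤ |v| ≤ M̄, there exists t ∈ (T/4, 3T/4) with X̄(t,0,x,v) ∈ B(x₀, r₀/2), and moreover |v|/2 ≤ |V̄(s,0,x,v)| ≤ 2|v| for all s ∈ [0,T]. -/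

import Mathlib

noncomputable section

open MeasureTheory Real

/-- Points of the plane; the torus `𝕋²` is represented via `ℤ²`-periodic objects on `ℝ²`. -/
abbrev V2 := ℝ × ℝ

/-- `v ↦ v⊥ = (v₂, -v₁)`. -/
def pperp (v : V2) : V2 := (v.2, -v.1)

/-- Euclidean norm on `ℝ²`. -/
noncomputable def en (v : V2) : ℝ := Real.sqrt (v.1 ^ 2 + v.2 ^ 2)

/-- Relativistic velocity `v̂ = v/√(1+|v|²/c²)` for speed of light `c`. -/
noncomputable def vhat (c : ℝ) (v : V2) : V2 :=
  (1 / Real.sqrt (1 + (v.1 ^ 2 + v.2 ^ 2) / c ^ 2)) • v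

/-- `ℤ²`-periodicity of a function on `ℝ²` (i.e. the function lives on the torus `𝕋²`). -/
def Zper {α : Type*} (g : V2 → α) : Prop :=
  ∀ (x : V2) (m n : ℤ), g (x.1 + (m : ℝ), x.2 + (n : ℝ)) = g x

/-- A fundamental domain for the torus. -/
def unitSq : Set V2 := Set.Icc ((0 : ℝ), (0 : ℝ)) ((1 : ℝ), (1 : ℝ))

/-- Integral over the torus of a (periodic) function. -/
noncomputable def intT2 (g : V2 → ℝ) : ℝ := ∫ x in unitSq, g x

/-- Integral over `𝕋² × ℝ²`. -/
noncomputable def intT2R2 (g : V2 → V2 → ℝ) : ℝ := ∫ x in unitSq, ∫ v : V2, g x v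

/-- Spatial divergence of a vector field on `ℝ²`. -/
noncomputable def divF (E : V2 → V2) (x : V2) : ℝ :=
  fderiv ℝ (fun y => (E y).1) x ((1 : ℝ), (0 : ℝ)) +
    fderiv ℝ (fun y => (E y).2) x ((0 : ℝ), (1 : ℝ))

/-- Geometric control condition for a (periodic) set `ω ⊆ 𝕋²`. -/
def GCC (ω : Set V2) : Prop :=
  ∀ x e : V2, en e = 1 → ∃ y : ℝ, 0 ≤ y ∧ x + y • e ∈ ω

/-- Open ball of the torus, of center `x₀` and radius `r` (as a periodic subset of `ℝ²`). -/
def ballT2 (x₀ : V2) (r : ℝ) : Set V2 :=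
  {x : V2 | ∃ m n : ℤ, en (x.1 - (x₀.1 + (m : ℝ)), x.2 - (x₀.2 + (n : ℝ))) < r}

/-- The full preimage in `ℝ²` of the image in `𝕋²` of the line through `p` directed by `d`. -/
def periodizedLine (p d : V2) : Set V2 :=
  {x : V2 | ∃ (t : ℝ) (m n : ℤ), x = p + t • d + ((m : ℝ), (n : ℝ))}

/-- The strip assumption: `ω` contains the image of a straight line of `ℝ²`
which is closed in the torus. -/
def StripAssumption (ω : Set V2) : Prop :=
  ∃ p d : V2, d ≠ 0 ∧ IsClosed (periodizedLine p d) ∧ periodizedLine p d ⊆ ω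

/-- All iterated derivatives of order at most `k` are bounded by `κ` in sup norm. -/
def DerivBound {E F : Type*} [NormedAddCommGroup E] [NormedSpace ℝ E]
    [NormedAddCommGroup F] [NormedSpace ℝ F] (k : ℕ) (κ : ℝ) (g : E → F) : Prop :=
  ∀ i : ℕ, i ≤ k → ∀ p, ‖iteratedFDeriv ℝ i g p‖ ≤ κ

/-- Relativistic characteristics for the force field `Force`, with speed of light `c`,
starting from `(x,v)` at time `s`. -/
def IsRelChar (c : ℝ) (Force : ℝ → V2 → V2 → V2) (s : ℝ) (x v : V2)
    (X V : ℝ → V2) : Prop :=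
  X s = x ∧ V s = v ∧
    ∀ t : ℝ, HasDerivAt X (vhat c (V t)) t ∧ HasDerivAt V (Force t (X t) (V t)) t

/-- `(F, E, b)` is a classical, `𝕋²`-periodic solution on `[0,T]` of the 2D relativistic
Vlasov–Maxwell system with speed of light `c` and source `S`. -/
def IsVMSolution (c T : ℝ) (F : ℝ × V2 × V2 → ℝ) (E : ℝ × V2 → V2)
    (b : ℝ × V2 → ℝ) (S : ℝ × V2 × V2 → ℝ) : Prop :=
  ContDiff ℝ 1 F ∧ ContDiff ℝ 1 E ∧ ContDiff ℝ 1 b ∧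
  (∀ t v, Zper fun x => F (t, x, v)) ∧ (∀ t, Zper fun x => E (t, x)) ∧
  (∀ t, Zper fun x => b (t, x)) ∧
  ∀ t ∈ Set.Icc (0 : ℝ) T, ∀ x v : V2,
    -- Vlasov equation: ∂ₜf + v̂·∇ₓf + (E + c⁻¹ v̂⊥ b)·∇ᵥf = S
    (fderiv ℝ F (t, x, v)
        ((1 : ℝ), vhat c v, E (t, x) + (c⁻¹ * b (t, x)) • pperp (vhat c v))
      = S (t, x, v)) ∧
    -- ∂ₜE₁ − c ∂_{x₂} b = −∫ f v̂₁ dv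
    (fderiv ℝ (fun p => (E p).1) (t, x) ((1 : ℝ), ((0 : ℝ), (0 : ℝ)))
        - c * fderiv ℝ b (t, x) ((0 : ℝ), ((0 : ℝ), (1 : ℝ)))
      = -∫ w : V2, F (t, x, w) * (vhat c w).1) ∧
    -- ∂ₜE₂ + c ∂_{x₁} b = −∫ f v̂₂ dv
    (fderiv ℝ (fun p => (E p).2) (t, x) ((1 : ℝ), ((0 : ℝ), (0 : ℝ)))
        + c * fderiv ℝ b (t, x) ((0 : ℝ), ((1 : ℝ), (0 : ℝ)))
      = -∫ w : V2, F (t, x, w) * (vhat c w).2) ∧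
    -- ∂ₜb + c (∂_{x₁}E₂ − ∂_{x₂}E₁) = 0
    (fderiv ℝ b (t, x) ((1 : ℝ), ((0 : ℝ), (0 : ℝ)))
        + c * (fderiv ℝ (fun p => (E p).2) (t, x) ((0 : ℝ), ((1 : ℝ), (0 : ℝ)))
            - fderiv ℝ (fun p => (E p).1) (t, x) ((0 : ℝ), ((0 : ℝ), (1 : ℝ)))) = 0) ∧
    -- Gauss law: ∂_{x₁}E₁ + ∂_{x₂}E₂ = ∫ f dv − ∫∫ f dv dx
    (fderiv ℝ (fun p => (E p).1) (t, x) ((0 : ℝ), ((1 : ℝ), (0 : ℝ)))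
        + fderiv ℝ (fun p => (E p).2) (t, x) ((0 : ℝ), ((0 : ℝ), (1 : ℝ)))
      = (∫ w : V2, F (t, x, w)) - intT2R2 fun y w => F (t, y, w))


/-- The `r`-thickening `K_r` of a (periodic) set `K ⊆ 𝕋²`, for the torus distance. -/
def Kthick (K : Set V2) (r : ℝ) : Set V2 :=
  {x : V2 | ∃ y ∈ K, ∃ m n : ℤ, en (x.1 - y.1 - (m : ℝ), x.2 - y.2 - (n : ℝ)) ≤ r}

/-- One-sided bending condition for a magnetic field on the torus. -/
def BendingOne (𝔟 : V2 → ℝ) : Prop :=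
  ∃ (K : Set V2) (b d D bt : ℝ),
    IsClosed K ∧ Zper (fun x => x ∈ K) ∧
    0 < b ∧ 0 < d ∧ 0 < D ∧ bt ≤ 0 ∧
    -- (1) 𝔟 ≥ b̲ on K_{2d}
    (∀ x ∈ Kthick K (2 * d), b ≤ 𝔟 x) ∧
    -- (2) thickened geometric control condition for K
    (∀ x e : V2, en e = 1 → ∃ t ∈ Set.Icc (0 : ℝ) D,
      ∀ s ∈ Set.Icc t (t + d / 2), x + s • e ∈ Kthick K d) ∧
    -- (3) global lower bound 𝔟 ≥ b̃
    (∀ x, bt ≤ 𝔟 x) ∧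
    -- (4) b̃·D + b̲·d/2 > 0
    0 < bt * D + b * d / 2

/-- The bending condition: `𝔟` or `−𝔟` satisfies the one-sided bending condition. -/
def Bending (𝔟 : V2 → ℝ) : Prop := BendingOne 𝔟 ∨ BendingOne fun x => -𝔟 x

/-!
The magnetic force only rotates the momentum, at the rate `-𝔟 / γ` with `γ` the Lorentz factor, and
`Force` moves it by at most `κ T` away from that rotation. In arc length a characteristic of
momentum `R` is therefore a curve of curvature close to `-𝔟 / R`. For large `R` such a curve stays
near its tangent over the length `D + d / 2`, so by the bending condition its direction turns by at
least about `(b̃ D + b̲ d / 2) / R` over each such length, and after finitely many of them it has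
taken every direction. One of these is the direction of `(1, k)` with `k` a large integer; a line
in that direction passes within `1 / k` of a translate of `x₀` after a bounded length, and the
characteristic follows its tangent line long enough to enter the ball.
-/

section

open Set Filter Topology

lemma norm_exp_mul_I_sub_exp_mul_I_le (a b : ℝ) :
    ‖Complex.exp (a * Complex.I) - Complex.exp (b * Complex.I)‖ ≤ |a - b| := by
  have hfactor : Complex.exp (a * Complex.I) - Complex.exp (b * Complex.I) =
      Complex.exp (b * Complex.I) * (Complex.exp (Complex.I * (a - b : ℝ)) - 1) := by
    rw [mul_sub, mul_one, ← Complex.exp_add]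
    push_cast
    ring_nf
  rw [hfactor, norm_mul, Complex.norm_exp_ofReal_mul_I, one_mul]
  exact Real.norm_exp_I_mul_ofReal_sub_one_le

lemma exists_mem_uIcc_exp_mul_I_eq {a b : ℝ} (hab : 2 * π ≤ |b - a|) {e : ℂ} (he : ‖e‖ = 1) :
    ∃ α ∈ uIcc a b, Complex.exp (α * Complex.I) = e := by
  have hper : Function.Periodic (fun α : ℝ => Complex.exp (α * Complex.I)) (2 * π) := fun α => by
    simp only [Complex.ofReal_add, Complex.ofReal_mul, Complex.ofReal_ofNat, add_mul]
    exact Complex.exp_periodic _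
  obtain ⟨α, hα, heq⟩ := hper.exists_mem_Ico Real.two_pi_pos e.arg (min a b)
  have hlen : min a b + 2 * π ≤ max a b := by
    linarith [max_sub_min_eq_abs a b]
  refine ⟨α, ⟨hα.1, hα.2.le.trans hlen⟩, heq.symm.trans ?_⟩
  simpa only [he, Complex.ofReal_one, one_mul] using Complex.norm_mul_exp_arg_mul_I e

lemma mul_sub_le_sub_of_forall_Icc_le_deriv {f : ℝ → ℝ} (hf : Differentiable ℝ f) {C a b : ℝ}
    (hab : a ≤ b) (hC : ∀ s ∈ Icc a b, C ≤ deriv f s) : C * (b - a) ≤ f b - f a :=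
  (convex_Icc a b).mul_sub_le_image_sub_of_le_deriv hf.continuous.continuousOn
    hf.differentiableOn (fun s hs => hC s (interior_subset hs))
    a (left_mem_Icc.2 hab) b (right_mem_Icc.2 hab) hab

lemma exists_add_mul_le_of_forall_step {f : ℝ → ℝ} {ℓ η A : ℝ} (hℓ : 0 ≤ ℓ)
    (hstep : ∀ s, 0 ≤ s → s + ℓ ≤ A → ∃ s' ∈ Icc s (s + ℓ), f s + η ≤ f s') (n : ℕ)
    (hn : n * ℓ ≤ A) : ∃ s ∈ Icc 0 (n * ℓ), f 0 + n * η ≤ f s := by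
  induction n with
  | zero => exact ⟨0, by simp, by simp⟩
  | succ n ih =>
    push_cast at hn ⊢
    obtain ⟨s, hs, hfs⟩ := ih (by linarith)
    obtain ⟨s', hs', hfs'⟩ := hstep s hs.1 (by linarith [hs.2])
    exact ⟨s', ⟨hs.1.trans hs'.1, by linarith [hs.2, hs'.2]⟩, by linarith⟩

lemma eventually_mul_lt_nhdsGT_zero (a : ℝ) {b : ℝ} (hb : 0 < b) :
    ∀ᶠ ε in 𝓝[>] (0 : ℝ), ε * a < b :=
  nhdsWithin_le_nhds <| (continuous_mul_const a).continuousAt.eventually_lt_const (by simpa)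

/-! ### Curves of approximately prescribed curvature -/

/-- Up to an error `ε`, the planar curve `X` runs through `[0, A]` with unit speed and tangent
angle `θ`, and its signed curvature at `z` is `k z`. -/
structure HasApproxCurvature (k : ℂ → ℝ) (ε A : ℝ) (X : ℝ → ℂ) (θ : ℝ → ℝ) : Prop where
  differentiable_curve : Differentiable ℝ X
  differentiable_angle : Differentiable ℝ θ
  norm_deriv_sub_le : ∀ s ∈ Icc 0 A, ‖deriv X s - Complex.exp (θ s * Complex.I)‖ ≤ ε
  abs_deriv_sub_le : ∀ s ∈ Icc 0 A, |deriv θ s - k (X s)| ≤ ε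

/-- The bending condition for a function `k` on the plane, in which `K` plays the role of `K_d`:
hence the balls of radius `d` around the points of `K`, where `BendingOne` has `K_{2d}`. -/
structure PlanarBending (k : ℂ → ℝ) (K : Set ℂ) (d D b bt : ℝ) : Prop where
  radius_pos : 0 < d
  lower_nonpos : bt ≤ 0
  lower_le : ∀ z, bt ≤ k z
  le_of_mem_closedBall : ∀ z ∈ K, ∀ y ∈ Metric.closedBall z d, b ≤ k y
  exists_segment_subset : ∀ z u : ℂ, ‖u‖ = 1 → ∃ t ∈ Icc (0 : ℝ) D,
    ∀ s ∈ Icc t (t + d / 2), z + s • u ∈ K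

lemma PlanarBending.const_mul {k : ℂ → ℝ} {K : Set ℂ} {d D b bt a : ℝ} (ha : 0 ≤ a)
    (h : PlanarBending k K d D b bt) :
    PlanarBending (fun z => a * k z) K d D (a * b) (a * bt) where
  radius_pos := h.radius_pos
  lower_nonpos := mul_nonpos_of_nonneg_of_nonpos ha h.lower_nonpos
  lower_le z := mul_le_mul_of_nonneg_left (h.lower_le z) ha
  le_of_mem_closedBall z hz y hy := mul_le_mul_of_nonneg_left (h.le_of_mem_closedBall z hz y hy) ha
  exists_segment_subset := h.exists_segment_subset

lemma PlanarBending.zero_le_reach {k : ℂ → ℝ} {K : Set ℂ} {d D b bt : ℝ}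
    (h : PlanarBending k K d D b bt) : 0 ≤ D :=
  let ⟨_, ht, _⟩ := h.exists_segment_subset 0 1 norm_one
  ht.1.trans ht.2

namespace HasApproxCurvature

variable {k : ℂ → ℝ} {ε A ω : ℝ} {X : ℝ → ℂ} {θ : ℝ → ℝ}

lemma abs_angle_sub_le (h : HasApproxCurvature k ε A X θ) (hω : ∀ z, |k z| ≤ ω) {s₀ s : ℝ}
    (hs₀ : 0 ≤ s₀) (hs : s₀ ≤ s) (hsA : s ≤ A) : |θ s - θ s₀| ≤ (ω + ε) * (s - s₀) := by
  refine norm_image_sub_le_of_norm_deriv_le_segment'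
    (fun r _ => (h.differentiable_angle r).hasDerivAt.hasDerivWithinAt) (fun r hr => ?_) s
    (right_mem_Icc.2 hs)
  have herr := h.abs_deriv_sub_le r ⟨hs₀.trans hr.1, hr.2.le.trans hsA⟩
  calc |deriv θ r| = |k (X r) + (deriv θ r - k (X r))| := by rw [add_sub_cancel]
    _ ≤ ω + ε := (abs_add_le _ _).trans (add_le_add (hω _) herr)

lemma norm_sub_tangent_le (h : HasApproxCurvature k ε A X θ) (hω : ∀ z, |k z| ≤ ω)
    {s₀ s ℓ : ℝ} (hs₀ : 0 ≤ s₀) (hs : s₀ ≤ s) (hsℓ : s ≤ s₀ + ℓ) (hsA : s ≤ A) :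
    ‖X s - (X s₀ + (s - s₀) • Complex.exp (θ s₀ * Complex.I))‖ ≤ ((ω + ε) * ℓ + ε) * ℓ := by
  set e := Complex.exp (θ s₀ * Complex.I)
  have hε : 0 ≤ ε := (abs_nonneg _).trans (h.abs_deriv_sub_le s₀ ⟨hs₀, hs.trans hsA⟩)
  have hω₀ : 0 ≤ ω := (abs_nonneg _).trans (hω 0)
  have hℓ : 0 ≤ ℓ := by linarith
  have hderiv : ∀ r, HasDerivAt (fun r => X r - (r - s₀) • e) (deriv X r - e) r := fun r => by
    simpa only [one_smul] using (h.differentiable_curve r).hasDerivAt.fun_sub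
      (((hasDerivAt_id' r).sub_const s₀).smul_const e)
  have hbound : ∀ r ∈ Ico s₀ s, ‖deriv X r - e‖ ≤ (ω + ε) * ℓ + ε := fun r hr => by
    have hrA : r ≤ A := hr.2.le.trans hsA
    have hturn : |θ r - θ s₀| ≤ (ω + ε) * ℓ := (h.abs_angle_sub_le hω hs₀ hr.1 hrA).trans <|
      mul_le_mul_of_nonneg_left (by linarith [hr.2]) (by positivity)
    calc ‖deriv X r - e‖
        ≤ ‖deriv X r - Complex.exp (θ r * Complex.I)‖ + ‖Complex.exp (θ r * Complex.I) - e‖ :=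
          norm_sub_le_norm_sub_add_norm_sub _ _ _
      _ ≤ ε + (ω + ε) * ℓ := add_le_add (h.norm_deriv_sub_le r ⟨hs₀.trans hr.1, hrA⟩)
          ((norm_exp_mul_I_sub_exp_mul_I_le _ _).trans hturn)
      _ = (ω + ε) * ℓ + ε := add_comm _ _
  have hmean := norm_image_sub_le_of_norm_deriv_le_segment'
    (fun r _ => (hderiv r).hasDerivWithinAt) hbound s (right_mem_Icc.2 hs)
  rw [sub_self, zero_smul, sub_zero, sub_right_comm, sub_sub] at hmean
  exact hmean.trans (mul_le_mul_of_nonneg_left (by linarith) (by positivity))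

variable {σ : ℝ} {K : Set ℂ} {d D b bt : ℝ}

lemma mul_sub_le_mul_angle_sub (h : HasApproxCurvature k ε A X θ) (hσ : |σ| ≤ 1) {C s₀ s : ℝ}
    (hs₀ : 0 ≤ s₀) (hs : s₀ ≤ s) (hsA : s ≤ A) (hC : ∀ r ∈ Icc s₀ s, C ≤ σ * k (X r)) :
    (C - ε) * (s - s₀) ≤ σ * θ s - σ * θ s₀ := by
  refine mul_sub_le_sub_of_forall_Icc_le_deriv (f := fun r => σ * θ r)
    (h.differentiable_angle.const_mul σ) hs fun r hr => ?_
  rw [deriv_const_mul _ (h.differentiable_angle r)]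
  have herr : |σ * (deriv θ r - k (X r))| ≤ ε := by
    rw [abs_mul]
    exact (mul_le_of_le_one_left (abs_nonneg _) hσ).trans
      (h.abs_deriv_sub_le r ⟨hs₀.trans hr.1, hr.2.trans hsA⟩)
  linarith [(abs_le.1 herr).1, hC r hr]

lemma exists_angle_gain (h : HasApproxCurvature k ε A X θ) (hω : ∀ z, |k z| ≤ ω)
    (hσ : |σ| ≤ 1) (hk : PlanarBending (fun z => σ * k z) K d D b bt)
    (hdrift : ((ω + ε) * (D + d / 2) + ε) * (D + d / 2) ≤ d) {s₀ : ℝ} (hs₀ : 0 ≤ s₀)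
    (hs₀A : s₀ + (D + d / 2) ≤ A) :
    ∃ s ∈ Icc s₀ (s₀ + (D + d / 2)),
      σ * θ s₀ + (bt * D + b * d / 2 - ε * (D + d / 2)) ≤ σ * θ s := by
  have hd := hk.radius_pos
  obtain ⟨t, ht, hsegment⟩ :=
    hk.exists_segment_subset (X s₀) _ (Complex.norm_exp_ofReal_mul_I (θ s₀))
  have hε : 0 ≤ ε :=
    (abs_nonneg _).trans (h.abs_deriv_sub_le s₀ ⟨hs₀, by linarith [ht.1, ht.2]⟩)
  have houtside : (bt - ε) * (s₀ + t - s₀) ≤ σ * θ (s₀ + t) - σ * θ s₀ :=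
    h.mul_sub_le_mul_angle_sub hσ hs₀ (by linarith [ht.1]) (by linarith [ht.2])
      fun r _ => hk.lower_le (X r)
  have hinside : (b - ε) * (s₀ + t + d / 2 - (s₀ + t)) ≤
      σ * θ (s₀ + t + d / 2) - σ * θ (s₀ + t) := by
    refine h.mul_sub_le_mul_angle_sub hσ (by linarith [ht.1]) (by linarith) (by linarith [ht.2])
      fun r hr => ?_
    have htangent := h.norm_sub_tangent_le hω (s := r) (ℓ := D + d / 2) hs₀
      (by linarith [hr.1, ht.1]) (by linarith [hr.2, ht.2]) (by linarith [hr.2, ht.2])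
    exact hk.le_of_mem_closedBall _ (hsegment (r - s₀) ⟨by linarith [hr.1], by linarith [hr.2]⟩) _
      (mem_closedBall_iff_norm.2 (htangent.trans hdrift))
  refine ⟨s₀ + t + d / 2, ⟨by linarith [ht.1], by linarith [ht.2]⟩, ?_⟩
  have hbt : bt * D ≤ bt * t := mul_le_mul_of_nonpos_left ht.2 hk.lower_nonpos
  have herr : ε * t ≤ ε * D := mul_le_mul_of_nonneg_left ht.2 hε
  linarith

lemma exists_angle_eq (h : HasApproxCurvature k ε A X θ) (hω : ∀ z, |k z| ≤ ω)
    (hσ : |σ| ≤ 1) (hk : PlanarBending (fun z => σ * k z) K d D b bt)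
    (hdrift : ((ω + ε) * (D + d / 2) + ε) * (D + d / 2) ≤ d) {N : ℕ}
    (hN : 2 * π ≤ N * (bt * D + b * d / 2 - ε * (D + d / 2))) (hA : N * (D + d / 2) ≤ A)
    {e : ℂ} (he : ‖e‖ = 1) :
    ∃ s ∈ Icc 0 (N * (D + d / 2)), Complex.exp (θ s * Complex.I) = e := by
  have hℓ : 0 ≤ D + d / 2 := add_nonneg hk.zero_le_reach (half_pos hk.radius_pos).le
  obtain ⟨s₁, hs₁, hgain⟩ := exists_add_mul_le_of_forall_step (f := fun s => σ * θ s) hℓ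
    (fun _ => h.exists_angle_gain hω hσ hk hdrift) N hA
  have hturn : 2 * π ≤ |θ s₁ - θ 0| := calc
    2 * π ≤ |σ * (θ s₁ - θ 0)| := le_trans (by linarith) (le_abs_self _)
    _ ≤ |θ s₁ - θ 0| := by
      rw [abs_mul]
      exact mul_le_of_le_one_left (abs_nonneg _) hσ
  obtain ⟨α, hα, hαe⟩ := exists_mem_uIcc_exp_mul_I_eq hturn he
  obtain ⟨s, hs, rfl⟩ :=
    intermediate_value_uIcc h.differentiable_angle.continuous.continuousOn hα
  rw [uIcc_of_le hs₁.1] at hs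
  exact ⟨s, ⟨hs.1, hs.2.trans hs₁.2⟩, hαe⟩

lemma exists_mem_of_bending (h : HasApproxCurvature k ε A X θ) (hω : ∀ z, |k z| ≤ ω)
    (hσ : |σ| ≤ 1) (hk : PlanarBending (fun z => σ * k z) K d D b bt)
    (hdrift : ((ω + ε) * (D + d / 2) + ε) * (D + d / 2) ≤ d) {N : ℕ}
    (hN : 2 * π ≤ N * (bt * D + b * d / 2 - ε * (D + d / 2))) {e : ℂ} (he : ‖e‖ = 1) {L r : ℝ}
    {U : Set ℂ} (hU : ∀ z : ℂ, ∃ l ∈ Icc (0 : ℝ) L, Metric.closedBall (z + l • e) r ⊆ U)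
    (hdrift' : ((ω + ε) * L + ε) * L ≤ r) (hA : N * (D + d / 2) + L ≤ A) :
    ∃ s ∈ Icc 0 A, X s ∈ U := by
  have hL : 0 ≤ L := let ⟨_, hl, _⟩ := hU 0; hl.1.trans hl.2
  obtain ⟨s, hs, hse⟩ := h.exists_angle_eq hω hσ hk hdrift hN (by linarith) he
  obtain ⟨l, hl, hball⟩ := hU (X s)
  have hslA : s + l ≤ A := by linarith [hs.2, hl.2]
  have htangent := h.norm_sub_tangent_le hω (ℓ := L) hs.1 (by linarith [hl.1])
    (by linarith [hl.2]) hslA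
  rw [hse, add_sub_cancel_left] at htangent
  exact ⟨s + l, ⟨add_nonneg hs.1 hl.1, hslA⟩,
    hball (mem_closedBall_iff_norm.2 (htangent.trans hdrift'))⟩

end HasApproxCurvature

lemma PlanarBending.exists_forall_hasApproxCurvature_exists_mem {k : ℂ → ℝ} {K : Set ℂ}
    {σ d D b bt B L r : ℝ} (hk : PlanarBending (fun z => σ * k z) K d D b bt) (hσ : |σ| ≤ 1)
    (hgain : 0 < bt * D + b * d / 2) (hB : ∀ z, |k z| ≤ B) {e : ℂ} (he : ‖e‖ = 1) (hr : 0 < r)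
    {U : Set ℂ} (hU : ∀ z : ℂ, ∃ l ∈ Icc (0 : ℝ) L, Metric.closedBall (z + l • e) r ⊆ U) :
    ∃ m > 0, ∀ M > 0, ∃ A > 0, ∃ ε > 0, ∀ R, m ≤ R → R ≤ M → ∀ X θ,
      HasApproxCurvature (fun z => R⁻¹ * k z) ε A X θ → ∃ s ∈ Icc 0 A, X s ∈ U := by
  have hd := hk.radius_pos
  have hD := hk.zero_le_reach
  have hL : 0 ≤ L := let ⟨_, hl, _⟩ := hU 0; hl.1.trans hl.2
  have hB₀ : 0 ≤ B := (abs_nonneg _).trans (hB 0)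
  set ℓ := D + d / 2 with hℓ
  set δ := bt * D + b * d / 2 with hδ
  obtain ⟨μ, ⟨hμd, hμr⟩, hμ⟩ :=
    ((eventually_mul_lt_nhdsGT_zero (B * ℓ ^ 2) (half_pos hd)).and
      (eventually_mul_lt_nhdsGT_zero (B * L ^ 2) (half_pos hr))).and
      self_mem_nhdsWithin |>.exists
  refine ⟨μ⁻¹, inv_pos.2 hμ, fun M hM => ?_⟩
  obtain ⟨ε, ⟨⟨hεd, hεr⟩, hεδ⟩, hε⟩ :=
    (((eventually_mul_lt_nhdsGT_zero (ℓ ^ 2 + ℓ) (half_pos hd)).and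
      (eventually_mul_lt_nhdsGT_zero (L ^ 2 + L) (half_pos hr))).and
      (eventually_mul_lt_nhdsGT_zero ℓ (half_pos (div_pos hgain hM)))).and
      self_mem_nhdsWithin |>.exists
  obtain ⟨N, hN⟩ := exists_nat_ge (2 * π / (δ / M / 2))
  rw [div_le_iff₀ (by positivity)] at hN
  refine ⟨N * ℓ + L + 1, by positivity, ε, hε, fun R hmR hRM X θ hX => ?_⟩
  have hR : 0 < R := (inv_pos.2 hμ).trans_le hmR
  have hRμ : R⁻¹ ≤ μ := inv_le_of_inv_le₀ hμ hmR
  have hω : ∀ z, |R⁻¹ * k z| ≤ R⁻¹ * B := fun z => by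
    rw [abs_mul, abs_of_pos (inv_pos.2 hR)]
    exact mul_le_mul_of_nonneg_left (hB z) (inv_pos.2 hR).le
  have hkR : PlanarBending (fun z => σ * (R⁻¹ * k z)) K d D (R⁻¹ * b) (R⁻¹ * bt) := by
    simpa only [mul_left_comm] using hk.const_mul (inv_pos.2 hR).le
  have hdrift : ∀ {y ρ : ℝ}, μ * (B * y ^ 2) < ρ / 2 → ε * (y ^ 2 + y) < ρ / 2 →
      ((R⁻¹ * B + ε) * y + ε) * y ≤ ρ := fun {y ρ} h₁ h₂ => by
    have : R⁻¹ * (B * y ^ 2) ≤ μ * (B * y ^ 2) := mul_le_mul_of_nonneg_right hRμ (by positivity)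
    linarith
  have hturn : δ / M ≤ R⁻¹ * bt * D + R⁻¹ * b * d / 2 := calc
    δ / M ≤ δ / R := div_le_div_of_nonneg_left hgain.le hR hRM
    _ = _ := by rw [hδ]; ring
  refine hX.exists_mem_of_bending hω hσ hkR (hdrift hμd hεd) (hN.trans ?_) he hU
    (hdrift hμr hεr) (le_add_of_nonneg_right one_pos.le)
  rw [← hℓ]
  exact mul_le_mul_of_nonneg_left (by linarith) N.cast_nonneg

/-! ### Lines on the torus -/

/-- The identification of the plane `V2` with `ℂ`, which carries the Euclidean norm `en`. -/
def toComplex : V2 ≃L[ℝ] ℂ := Complex.equivRealProdCLM.symm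

lemma norm_toComplex (v : V2) : ‖toComplex v‖ = en v :=
  Complex.norm_eq_sqrt_sq_add_sq _

lemma toComplex_pperp (v : V2) : toComplex (pperp v) = -(Complex.I * toComplex v) := by
  apply Complex.ext <;> simp [toComplex, pperp]

lemma en_symm_toComplex (z : ℂ) : en (toComplex.symm z) = ‖z‖ := by
  rw [← norm_toComplex, ContinuousLinearEquiv.apply_symm_apply]

lemma en_add_le (v w : V2) : en (v + w) ≤ en v + en w := by
  simpa only [← norm_toComplex, map_add] using norm_add_le (toComplex v) (toComplex w)

lemma continuous_en : Continuous en :=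
  toComplex.continuous.norm.congr norm_toComplex

lemma en_sq (v : V2) : en v ^ 2 = v.1 ^ 2 + v.2 ^ 2 := Real.sq_sqrt (by positivity)

lemma exists_forall_abs_le_of_Zper {g : V2 → ℝ} (hg : Continuous g) (hper : Zper g) :
    ∃ B, ∀ x, |g x| ≤ B := by
  obtain ⟨B, hB⟩ := (isCompact_Icc : IsCompact unitSq).exists_bound_of_continuousOn
    hg.continuousOn
  refine ⟨B, fun x => ?_⟩
  have hfract : g (Int.fract x.1, Int.fract x.2) = g x := by
    simpa only [Int.fract_add_floor] using
      (hper (Int.fract x.1, Int.fract x.2) ⌊x.1⌋ ⌊x.2⌋).symm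
  rw [← hfract]
  exact hB _ ⟨⟨Int.fract_nonneg _, Int.fract_nonneg _⟩,
    (Int.fract_lt_one _).le, (Int.fract_lt_one _).le⟩

lemma mem_Kthick_add {K : Set V2} {r s : ℝ} {x y : V2} (hx : x ∈ Kthick K r)
    (hy : en (y - x) ≤ s) : y ∈ Kthick K (r + s) := by
  obtain ⟨p, hp, m, n, hxp⟩ := hx
  refine ⟨p, hp, m, n, ?_⟩
  calc en (y - p - ((m : ℝ), (n : ℝ))) = en (x - p - ((m : ℝ), (n : ℝ)) + (y - x)) := by abel_nf
    _ ≤ r + s := (en_add_le _ _).trans (add_le_add hxp hy)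

lemma mem_ballT2_add {x₀ x y : V2} {r s : ℝ} (hx : x ∈ ballT2 x₀ r) (hy : en (y - x) ≤ s) :
    y ∈ ballT2 x₀ (r + s) := by
  obtain ⟨m, n, hxm⟩ := hx
  refine ⟨m, n, ?_⟩
  calc en (y - (x₀ + ((m : ℝ), (n : ℝ)))) = en (x - (x₀ + ((m : ℝ), (n : ℝ))) + (y - x)) := by
        abel_nf
    _ < r + s := (en_add_le _ _).trans_lt (add_lt_add_of_lt_of_le hxm hy)

lemma BendingOne.exists_planarBending {𝔟 : V2 → ℝ} (h : BendingOne 𝔟) :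
    ∃ K d D b bt, PlanarBending (fun z => 𝔟 (toComplex.symm z)) K d D b bt ∧
      0 < bt * D + b * d / 2 := by
  obtain ⟨K, b, d, D, bt, -, -, -, hd, -, hbt, hK, hseg, hlower, hgain⟩ := h
  refine ⟨toComplex.symm ⁻¹' Kthick K d, d, D, b, bt,
    ⟨hd, hbt, fun _ => hlower _, fun z hz y hy => hK _ ?_, fun z u hu => ?_⟩, hgain⟩
  · rw [two_mul]
    refine mem_Kthick_add hz ?_
    rwa [← map_sub, en_symm_toComplex, ← mem_closedBall_iff_norm]
  · simpa only [mem_preimage, map_add, map_smul] using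
      hseg (toComplex.symm z) (toComplex.symm u) (by rwa [en_symm_toComplex])

/- A line of slope `k` crosses the lines `y ∈ ℤ` at abscissae `1 / k` apart, so it does so shortly
before it reaches a line `x ∈ ℤ`. -/
lemma exists_line_near_int_point {k : ℝ} (hk : 1 ≤ k) (p q : ℝ) :
    ∃ t ∈ Icc (0 : ℝ) 2, ∃ m n : ℤ, |p + t - m| < 1 / k ∧ q + t * k = n := by
  have hk₀ : 0 < k := one_pos.trans_le hk
  set t₁ := 2 - Int.fract p
  set f := Int.fract (q + t₁ * k) / k
  have hf₀ : 0 ≤ f := div_nonneg (Int.fract_nonneg _) hk₀.le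
  have hfk : f < 1 / k := div_lt_div_of_pos_right (Int.fract_lt_one _) hk₀
  have hk₁ : 1 / k ≤ 1 := (div_le_one hk₀).2 hk
  refine ⟨t₁ - f, ⟨by linarith [Int.fract_lt_one p], by linarith [Int.fract_nonneg p]⟩,
    ⌊p⌋ + 2, ⌊q + t₁ * k⌋, ?_, ?_⟩
  · have : p + (t₁ - f) - (⌊p⌋ + 2 : ℤ) = -f := by
      push_cast
      linarith [Int.self_sub_floor p]
    rwa [this, abs_neg, abs_of_nonneg hf₀]
  · have : f * k = Int.fract (q + t₁ * k) := div_mul_cancel₀ _ hk₀.ne'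
    linarith [Int.self_sub_floor (q + t₁ * k)]

lemma exists_direction_mem_ballT2 (x₀ : V2) {r : ℝ} (hr : 0 < r) :
    ∃ e : V2, en e = 1 ∧ ∃ L, ∀ x : V2, ∃ l ∈ Icc (0 : ℝ) L, x + l • e ∈ ballT2 x₀ r := by
  obtain ⟨j, hj⟩ := exists_nat_one_div_lt hr
  set k : ℝ := j + 1
  set w : V2 := (1, k)
  have hw : 0 < en w := Real.sqrt_pos.2 (by positivity)
  refine ⟨(en w)⁻¹ • w, ?_, 2 * en w, fun x => ?_⟩
  · rw [← norm_toComplex, map_smul, norm_smul, norm_toComplex, norm_inv, Real.norm_of_nonneg hw.le,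
      inv_mul_cancel₀ hw.ne']
  obtain ⟨t, ht, m, n, hm, hn⟩ :=
    exists_line_near_int_point (k := k) (by simp [k]) (x.1 - x₀.1) (x.2 - x₀.2)
  refine ⟨t * en w, ⟨mul_nonneg ht.1 hw.le, mul_le_mul_of_nonneg_right ht.2 hw.le⟩, m, n, ?_⟩
  rw [smul_smul, mul_assoc, mul_inv_cancel₀ hw.ne', mul_one]
  have hpoint : ((x + t • w).1 - (x₀.1 + m), (x + t • w).2 - (x₀.2 + n)) =
      (x.1 - x₀.1 + t - m, (0 : ℝ)) := by
    ext
    · simp only [w, Prod.fst_add, Prod.smul_fst, smul_eq_mul]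
      ring
    · simp only [w, Prod.snd_add, Prod.smul_snd, smul_eq_mul]
      linarith
  rw [hpoint, en, zero_pow two_ne_zero, add_zero, Real.sqrt_sq_eq_abs]
  exact hm.trans hj

lemma exists_direction_closedBall_subset_ballT2 (x₀ : V2) {r : ℝ} (hr : 0 < r) :
    ∃ e : ℂ, ‖e‖ = 1 ∧ ∃ L, ∀ z : ℂ, ∃ l ∈ Icc (0 : ℝ) L,
      Metric.closedBall (z + l • e) (r / 2) ⊆ toComplex.symm ⁻¹' ballT2 x₀ r := by
  obtain ⟨e, he, L, hL⟩ := exists_direction_mem_ballT2 x₀ (half_pos hr)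
  refine ⟨toComplex e, by rw [norm_toComplex, he], L, fun z => ?_⟩
  obtain ⟨l, hl, hmem⟩ := hL (toComplex.symm z)
  refine ⟨l, hl, fun y hy => add_halves r ▸ mem_ballT2_add hmem ?_⟩
  rwa [← norm_toComplex, map_sub, map_add, map_smul, ContinuousLinearEquiv.apply_symm_apply,
    ContinuousLinearEquiv.apply_symm_apply, ← mem_closedBall_iff_norm]

/-! ### Relativistic characteristics -/

/-- The inverse Lorentz factor of a particle of unit mass and momentum `p`. -/
def invLorentz (c p : ℝ) : ℝ := 1 / √(1 + p ^ 2 / c ^ 2)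

section invLorentz

variable {c p q : ℝ}

lemma vhat_eq_invLorentz_smul (c : ℝ) (v : V2) : vhat c v = invLorentz c (en v) • v := by
  rw [vhat, invLorentz, en_sq]

lemma one_le_sqrt_one_add_sq_div_sq (c p : ℝ) : 1 ≤ √(1 + p ^ 2 / c ^ 2) :=
  Real.one_le_sqrt.2 (le_add_of_nonneg_right (by positivity))

lemma invLorentz_pos (c p : ℝ) : 0 < invLorentz c p :=
  one_div_pos.2 (one_pos.trans_le (one_le_sqrt_one_add_sq_div_sq c p))

lemma invLorentz_le_one (c p : ℝ) : invLorentz c p ≤ 1 :=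
  div_le_one_of_le₀ (one_le_sqrt_one_add_sq_div_sq c p) (by positivity)

lemma continuous_invLorentz (c : ℝ) : Continuous (invLorentz c) :=
  continuous_const.div (by fun_prop) fun p =>
    (one_pos.trans_le (one_le_sqrt_one_add_sq_div_sq c p)).ne'

lemma invLorentz_le_invLorentz {c₀ : ℝ} (hc₀ : 0 < c₀) (hc : c₀ ≤ c) (hq : 0 ≤ q) (hqp : q ≤ p) :
    invLorentz c₀ p ≤ invLorentz c q := by
  unfold invLorentz
  gcongr

lemma abs_sqrt_one_add_sq_sub_le (x y : ℝ) : |√(1 + x ^ 2) - √(1 + y ^ 2)| ≤ |x - y| := by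
  have hnorm : ∀ t : ℝ, √(1 + t ^ 2) = ‖(⟨1, t⟩ : ℂ)‖ := fun t => by
    rw [Complex.norm_eq_sqrt_sq_add_sq, one_pow]
  rw [hnorm, hnorm]
  refine (abs_norm_sub_norm_le _ _).trans_eq ?_
  simp [Complex.norm_eq_sqrt_sq_add_sq, Real.sqrt_sq_eq_abs]

lemma abs_invLorentz_sub_le (hc : 0 < c) (p q : ℝ) :
    |invLorentz c p - invLorentz c q| ≤ |p - q| / c := by
  have hp := one_le_sqrt_one_add_sq_div_sq c p
  have hq := one_le_sqrt_one_add_sq_div_sq c q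
  rw [invLorentz, invLorentz, div_sub_div _ _ (by positivity) (by positivity), one_mul, mul_one,
    abs_div, abs_mul, abs_of_pos (by positivity : 0 < √(1 + p ^ 2 / c ^ 2)),
    abs_of_pos (by positivity : 0 < √(1 + q ^ 2 / c ^ 2))]
  calc _ ≤ |√(1 + q ^ 2 / c ^ 2) - √(1 + p ^ 2 / c ^ 2)| :=
        div_le_self (abs_nonneg _) (one_le_mul_of_one_le_of_one_le hp hq)
    _ ≤ |q / c - p / c| := by simpa only [div_pow] using abs_sqrt_one_add_sq_sub_le (q / c) (p / c)
    _ = |p - q| / c := by rw [← sub_div, abs_div, abs_of_pos hc, abs_sub_comm]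

end invLorentz

/- In the frame rotating by `θ`, the curve `W` moves at speed `‖f‖`. -/
lemma norm_sub_mul_exp_le {W f : ℝ → ℂ} {θ θ' : ℝ → ℝ} {κ : ℝ}
    (hθ : ∀ t, HasDerivAt θ (θ' t) t)
    (hW : ∀ t, HasDerivAt W (θ' t * Complex.I * W t + f t) t) (hf : ∀ t, ‖f t‖ ≤ κ) {t : ℝ}
    (ht : 0 ≤ t) :
    ‖W t - W 0 * Complex.exp ((θ t - θ 0 : ℝ) * Complex.I)‖ ≤ κ * t := by
  set E : ℝ → ℂ := fun s => Complex.exp (-(θ s * Complex.I)) with hE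
  have hEnorm : ∀ s, ‖E s‖ = 1 := fun s => by
    simp only [hE, ← neg_mul, ← Complex.ofReal_neg, Complex.norm_exp_ofReal_mul_I]
  have hderiv : ∀ s, HasDerivAt (fun s => W s * E s) (f s * E s) s := fun s => by
    refine ((hW s).mul ((hθ s).ofReal_comp.mul_const Complex.I).neg.cexp).congr_deriv ?_
    simp only [hE, Pi.neg_apply]
    ring
  have hmean := norm_image_sub_le_of_norm_deriv_le_segment'
    (fun s _ => (hderiv s).hasDerivWithinAt)
    (fun s _ => by rw [norm_mul, hEnorm, mul_one]; exact hf s) t (right_mem_Icc.2 ht)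
  have hexp : Complex.exp ((θ t - θ 0 : ℝ) * Complex.I) * E t = E 0 := by
    simp only [hE, ← Complex.exp_add]
    push_cast
    ring_nf
  calc ‖W t - W 0 * Complex.exp ((θ t - θ 0 : ℝ) * Complex.I)‖
      = ‖W t * E t - W 0 * E 0‖ := by
        rw [← hexp, ← mul_assoc, ← sub_mul, norm_mul, hEnorm, mul_one]
    _ ≤ κ * t := by simpa only [sub_zero] using hmean

/-- `X` is the position and `V` the momentum of a relativistic particle, with `V` staying
`η`-close on `[0, T]` to the momentum `R exp (i θ)` which the magnetic field `𝔟` alone rotates. -/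
structure IsNearGyration (c : ℝ) (𝔟 : V2 → ℝ) (η T R : ℝ) (X V : ℝ → V2) (θ : ℝ → ℝ) :
    Prop where
  hasDerivAt_position : ∀ t, HasDerivAt X (vhat c (V t)) t
  hasDerivAt_angle : ∀ t, HasDerivAt θ (-(invLorentz c (en (V t)) * 𝔟 (X t))) t
  norm_momentum_sub_le : ∀ t ∈ Icc 0 T,
    ‖toComplex (V t) - R * Complex.exp (θ t * Complex.I)‖ ≤ η

lemma IsRelChar.exists_isNearGyration {c κ T : ℝ} {𝔟 : V2 → ℝ} (h𝔟 : Continuous 𝔟)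
    {Force : ℝ → V2 → V2 → V2} (hF : ∀ t x v, en (Force t x v) ≤ κ) {x v : V2} {X V : ℝ → V2}
    (h : IsRelChar c (fun t y w => 𝔟 y • pperp (vhat c w) + Force t y w) 0 x v X V) :
    ∃ θ, IsNearGyration c 𝔟 (κ * T) T (en v) X V θ := by
  obtain ⟨-, hV₀, hXV⟩ := h
  have hX : Continuous X := continuous_iff_continuousAt.2 fun t => (hXV t).1.continuousAt
  have hV : Continuous V := continuous_iff_continuousAt.2 fun t => (hXV t).2.continuousAt
  have hκ : 0 ≤ κ := (norm_toComplex (Force 0 0 0) ▸ norm_nonneg _).trans (hF 0 0 0)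
  set θ' : ℝ → ℝ := fun t => -(invLorentz c (en (V t)) * 𝔟 (X t)) with hθ'
  have hθ'c : Continuous θ' :=
    (((continuous_invLorentz c).comp (continuous_en.comp hV)).mul (h𝔟.comp hX)).neg
  set θ : ℝ → ℝ := fun t => (toComplex v).arg + ∫ s in (0 : ℝ)..t, θ' s with hθ
  have hθd : ∀ t, HasDerivAt θ (θ' t) t := fun t =>
    (hθ'c.integral_hasStrictDerivAt 0 t).hasDerivAt.const_add _
  have hθ₀ : θ 0 = (toComplex v).arg := by
    simp only [hθ, intervalIntegral.integral_same, add_zero]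
  have hVd : ∀ t, HasDerivAt (fun t => toComplex (V t))
      (θ' t * Complex.I * toComplex (V t) + toComplex (Force t (X t) (V t))) t := fun t => by
    refine (toComplex.hasFDerivAt.comp_hasDerivAt t (hXV t).2).congr_deriv ?_
    rw [ContinuousLinearEquiv.coe_coe, map_add, map_smul, toComplex_pperp,
      vhat_eq_invLorentz_smul, map_smul, Complex.real_smul, Complex.real_smul]
    simp only [hθ']
    push_cast
    ring
  refine ⟨θ, fun t => (hXV t).1, hθd, fun t ht => ?_⟩
  have hpolar : toComplex (V 0) * Complex.exp ((θ t - θ 0 : ℝ) * Complex.I) =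
      en v * Complex.exp (θ t * Complex.I) := by
    rw [hV₀, ← norm_toComplex, hθ₀]
    nth_rw 1 [← Complex.norm_mul_exp_arg_mul_I (toComplex v)]
    rw [mul_assoc, ← Complex.exp_add]
    push_cast
    ring_nf
  rw [← hpolar]
  exact (norm_sub_mul_exp_le hθd hVd (fun s => (norm_toComplex _).trans_le (hF _ _ _)) ht.1).trans
    (mul_le_mul_of_nonneg_left ht.2 hκ)

namespace IsNearGyration

variable {c η T R : ℝ} {𝔟 : V2 → ℝ} {X V : ℝ → V2} {θ : ℝ → ℝ}

lemma abs_en_sub_le (h : IsNearGyration c 𝔟 η T R X V θ) (hR : 0 ≤ R) {t : ℝ}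
    (ht : t ∈ Icc 0 T) : |en (V t) - R| ≤ η := by
  have hnorm : ‖(R : ℂ) * Complex.exp (θ t * Complex.I)‖ = R := by
    rw [norm_mul, Complex.norm_exp_ofReal_mul_I, mul_one, Complex.norm_of_nonneg hR]
  calc |en (V t) - R|
      = |‖toComplex (V t)‖ - ‖(R : ℂ) * Complex.exp (θ t * Complex.I)‖| := by
        rw [norm_toComplex, hnorm]
    _ ≤ η := (abs_norm_sub_norm_le _ _).trans (h.norm_momentum_sub_le t ht)

lemma abs_invLorentz_en_sub_le (h : IsNearGyration c 𝔟 η T R X V θ) (hc : 0 < c) (hR : 0 ≤ R)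
    {t : ℝ} (ht : t ∈ Icc 0 T) : |invLorentz c (en (V t)) - invLorentz c R| ≤ η / c :=
  (abs_invLorentz_sub_le hc _ _).trans <|
    div_le_div_of_nonneg_right (h.abs_en_sub_le hR ht) hc.le

lemma norm_velocity_sub_le (h : IsNearGyration c 𝔟 η T R X V θ) (hc : 0 < c) (hR : 0 ≤ R)
    {t : ℝ} (ht : t ∈ Icc 0 T) :
    ‖toComplex (vhat c (V t)) - (invLorentz c R * R : ℝ) * Complex.exp (θ t * Complex.I)‖ ≤
      η * (1 + R / c) := by
  set g := invLorentz c (en (V t))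
  set E := Complex.exp (θ t * Complex.I)
  have hsplit : toComplex (vhat c (V t)) - (invLorentz c R * R : ℝ) * E =
      (g : ℂ) * (toComplex (V t) - R * E) + ((g - invLorentz c R : ℝ) : ℂ) * (R * E) := by
    rw [vhat_eq_invLorentz_smul, map_smul, Complex.real_smul]
    push_cast
    ring
  have hmomentum : ‖(g : ℂ) * (toComplex (V t) - R * E)‖ ≤ η := by
    rw [norm_mul, Complex.norm_of_nonneg (invLorentz_pos _ _).le]
    exact (mul_le_of_le_one_left (norm_nonneg _) (invLorentz_le_one _ _)).trans
      (h.norm_momentum_sub_le t ht)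
  have hfactor : ‖((g - invLorentz c R : ℝ) : ℂ) * (R * E)‖ ≤ η / c * R := by
    rw [norm_mul, norm_mul, Complex.norm_exp_ofReal_mul_I, mul_one, Complex.norm_of_nonneg hR,
      Complex.norm_real]
    exact mul_le_mul_of_nonneg_right (h.abs_invLorentz_en_sub_le hc hR ht) hR
  rw [hsplit]
  exact (norm_add_le _ _).trans ((add_le_add hmomentum hfactor).trans_eq (by ring))

lemma hasApproxCurvature (h : IsNearGyration c 𝔟 η T R X V θ) (hc : 0 < c) (hR : 0 < R)
    {B ε A t₀ u : ℝ} (hB : ∀ x, |𝔟 x| ≤ B) (hu : u = invLorentz c R * R) (ht₀ : 0 ≤ t₀)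
    (hT : t₀ + A / u ≤ T) (hvelocity : η * (1 + R / c) ≤ ε * u) (hrate : η / c * B ≤ ε * u) :
    HasApproxCurvature (fun z => R⁻¹ * -𝔟 (toComplex.symm z)) ε A
      (fun s => toComplex (X (t₀ + s / u))) (fun s => θ (t₀ + s / u)) := by
  have hu₀ : 0 < u := hu ▸ mul_pos (invLorentz_pos c R) hR
  set τ : ℝ → ℝ := fun s => t₀ + s / u
  have hτ : ∀ s, HasDerivAt τ (1 / u) s := fun s => ((hasDerivAt_id' s).div_const u).const_add t₀
  have hτmem : ∀ s ∈ Icc 0 A, τ s ∈ Icc 0 T := fun s hs =>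
    ⟨add_nonneg ht₀ (div_nonneg hs.1 hu₀.le),
      (add_le_add_right (div_le_div_of_nonneg_right hs.2 hu₀.le) t₀).trans hT⟩
  have hX : ∀ s, HasDerivAt (fun s => toComplex (X (τ s)))
      ((1 / u) • toComplex (vhat c (V (τ s)))) s := fun s =>
    (toComplex.hasFDerivAt.comp_hasDerivAt _ (h.hasDerivAt_position (τ s))).scomp s (hτ s)
  have hθ : ∀ s, HasDerivAt (fun s => θ (τ s))
      (-(invLorentz c (en (V (τ s))) * 𝔟 (X (τ s))) * (1 / u)) s := fun s =>
    (h.hasDerivAt_angle (τ s)).comp s (hτ s)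
  refine ⟨fun s => (hX s).differentiableAt, fun s => (hθ s).differentiableAt,
    fun s hs => ?_, fun s hs => ?_⟩
  · have hscale : (1 / u) • toComplex (vhat c (V (τ s))) - Complex.exp (θ (τ s) * Complex.I) =
        (1 / u) • (toComplex (vhat c (V (τ s))) - u * Complex.exp (θ (τ s) * Complex.I)) := by
      rw [smul_sub, ← Complex.real_smul (x := u), smul_smul, one_div_mul_cancel hu₀.ne', one_smul]
    rw [(hX s).deriv, hscale, norm_smul, Real.norm_of_nonneg (by positivity),
      one_div_mul_eq_div, div_le_iff₀ hu₀]
    exact (hu ▸ h.norm_velocity_sub_le hc hR.le (hτmem s hs)).trans hvelocity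
  · have hscale : -(invLorentz c (en (V (τ s))) * 𝔟 (X (τ s))) * (1 / u) - R⁻¹ * -𝔟 (X (τ s)) =
        -((invLorentz c (en (V (τ s))) - invLorentz c R) * 𝔟 (X (τ s))) / u := by
      have hg := (invLorentz_pos c R).ne'
      rw [hu]
      field_simp
      ring
    rw [(hθ s).deriv, ContinuousLinearEquiv.symm_apply_apply, hscale, abs_div, abs_of_pos hu₀,
      abs_neg, abs_mul, div_le_iff₀ hu₀]
    refine le_trans ?_ hrate
    exact mul_le_mul (h.abs_invLorentz_en_sub_le hc hR.le (hτmem s hs)) (hB _) (abs_nonneg _)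
      ((abs_nonneg _).trans (h.abs_invLorentz_en_sub_le hc hR.le (hτmem s hs)))

end IsNearGyration

lemma Bending.exists_bendingOne_mul_neg {𝔟 : V2 → ℝ} (h : Bending 𝔟) :
    ∃ σ : ℝ, |σ| ≤ 1 ∧ BendingOne fun x => σ * -𝔟 x := by
  rcases h with h | h
  · exact ⟨-1, by simp, by simpa only [neg_mul_neg, one_mul] using h⟩
  · exact ⟨1, by simp, by simpa only [one_mul] using h⟩

lemma Bending.exists_forall_hasApproxCurvature_exists_mem {𝔟 : V2 → ℝ} (h : Bending 𝔟) {B : ℝ}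
    (hB : ∀ x, |𝔟 x| ≤ B) (x₀ : V2) {r : ℝ} (hr : 0 < r) :
    ∃ m > 0, ∀ M > 0, ∃ A > 0, ∃ ε > 0, ∀ R, m ≤ R → R ≤ M → ∀ X θ,
      HasApproxCurvature (fun z => R⁻¹ * -𝔟 (toComplex.symm z)) ε A X θ →
        ∃ s ∈ Icc 0 A, toComplex.symm (X s) ∈ ballT2 x₀ r := by
  obtain ⟨σ, hσ, hσ𝔟⟩ := h.exists_bendingOne_mul_neg
  obtain ⟨K, d, D, b, bt, hk, hgain⟩ := hσ𝔟.exists_planarBending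
  obtain ⟨e, he, L, hL⟩ := exists_direction_closedBall_subset_ballT2 x₀ hr
  exact hk.exists_forall_hasApproxCurvature_exists_mem hσ hgain
    (fun z => (abs_neg _).trans_le (hB _)) he (half_pos hr) hL

lemma exists_pos_perturbation_bounds {m a : ℝ} (c M B : ℝ) (hm : 0 < m) (ha : 0 < a) :
    ∃ η > 0, η * (1 + M / c) ≤ a ∧ η / c * B ≤ a ∧ η ≤ m / 2 := by
  obtain ⟨η, ⟨⟨hvelocity, hrate⟩, hspeed⟩, hη⟩ :=
    (((eventually_mul_lt_nhdsGT_zero (1 + M / c) ha).and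
      (eventually_mul_lt_nhdsGT_zero (c⁻¹ * B) ha)).and
      (eventually_mul_lt_nhdsGT_zero 1 (half_pos hm))).and self_mem_nhdsWithin |>.exists
  rw [← mul_assoc, ← div_eq_mul_inv] at hrate
  exact ⟨η, hη, hvelocity.le, hrate.le, by simpa only [mul_one] using hspeed.le⟩

namespace IsNearGyration

variable {c η T R : ℝ} {𝔟 : V2 → ℝ} {X V : ℝ → V2} {θ : ℝ → ℝ}

lemma half_le_en_and_en_le (h : IsNearGyration c 𝔟 η T R X V θ) (hR : 0 ≤ R) (hη : η ≤ R / 2)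
    {t : ℝ} (ht : t ∈ Icc 0 T) : R / 2 ≤ en (V t) ∧ en (V t) ≤ 2 * R := by
  have habs := abs_le.1 (h.abs_en_sub_le hR ht)
  constructor <;> linarith [habs.1, habs.2]

lemma hasApproxCurvature_of_le (h : IsNearGyration c 𝔟 η T R X V θ) {c₀ M B ε A t₀ u u₀ : ℝ}
    (hc₀ : 0 < c₀) (hc : c₀ ≤ c) (hR : 0 < R) (hRM : R ≤ M) (hη : 0 ≤ η)
    (hε : 0 ≤ ε) (hB : ∀ x, |𝔟 x| ≤ B) (hu : u = invLorentz c R * R) (hu₀ : 0 < u₀)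
    (hu₀u : u₀ ≤ u) (hvelocity : η * (1 + M / c₀) ≤ ε * u₀)
    (hrate : η / c₀ * B ≤ ε * u₀) (hA : 0 ≤ A) (ht₀ : 0 ≤ t₀) (hT : t₀ + A / u₀ ≤ T) :
    HasApproxCurvature (fun z => R⁻¹ * -𝔟 (toComplex.symm z)) ε A
      (fun s => toComplex (X (t₀ + s / u))) (fun s => θ (t₀ + s / u)) := by
  have hM : 0 ≤ M := hR.le.trans hRM
  have hB₀ : 0 ≤ B := (abs_nonneg _).trans (hB 0)
  have hεu : ε * u₀ ≤ ε * u := mul_le_mul_of_nonneg_left hu₀u hε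
  refine h.hasApproxCurvature (hc₀.trans_le hc) hR hB hu ht₀ (le_trans ?_ hT)
    (le_trans ?_ (hvelocity.trans hεu)) (le_trans ?_ (hrate.trans hεu)) <;> gcongr

end IsNearGyration

theorem bending_general_field_general (x₀ : V2) {r₀ : ℝ} (hr₀ : 0 < r₀) {𝔟 : V2 → ℝ}
    (h𝔟 : Continuous 𝔟) (hbdd : ∃ B, ∀ x, |𝔟 x| ≤ B) (hbend : Bending 𝔟) :
    ∃ m > 0, ∀ c₀ > 0, ∀ Mb > 0, ∃ T > 0, ∃ κ > 0, ∀ c ≥ c₀, ∀ Force : ℝ → V2 → V2 → V2,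
      (∀ t x v, en (Force t x v) ≤ κ) → ∀ x v : V2, m ≤ en v → en v ≤ Mb → ∀ X V : ℝ → V2,
        IsRelChar c (fun t y w => 𝔟 y • pperp (vhat c w) + Force t y w) 0 x v X V →
        (∃ t ∈ Ioo (T / 4) (3 * T / 4), X t ∈ ballT2 x₀ (r₀ / 2)) ∧
        ∀ s ∈ Icc 0 T, en v / 2 ≤ en (V s) ∧ en (V s) ≤ 2 * en v := by
  obtain ⟨B, hB⟩ := hbdd
  obtain ⟨m, hm, hvisit⟩ := hbend.exists_forall_hasApproxCurvature_exists_mem hB x₀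
    (half_pos hr₀)
  refine ⟨m, hm, fun c₀ hc₀ Mb hMb => ?_⟩
  obtain ⟨A, hA, ε, hε, hvisit⟩ := hvisit Mb hMb
  set u₀ := invLorentz c₀ Mb * m
  have hu₀ : 0 < u₀ := mul_pos (invLorentz_pos _ _) hm
  obtain ⟨η, hη, hvelocity, hrate, hspeed⟩ :=
    exists_pos_perturbation_bounds c₀ Mb B hm (mul_pos hε hu₀)
  set T := 8 * (A / u₀)
  have hT₀ : 0 < T := by positivity
  refine ⟨T, hT₀, η / T, by positivity, fun c hc Force hF x v hmv hvM X V hXV => ?_⟩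
  have hv : 0 < en v := hm.trans_le hmv
  obtain ⟨θ, hgyr⟩ := hXV.exists_isNearGyration (T := T) h𝔟 hF
  rw [div_mul_cancel₀ η hT₀.ne'] at hgyr
  set u := invLorentz c (en v) * en v with hu
  have hu₀u : u₀ ≤ u := mul_le_mul (invLorentz_le_invLorentz hc₀ hc hv.le hvM) hmv hm.le
    (invLorentz_pos _ _).le
  obtain ⟨s, hs, hmem⟩ := hvisit (en v) hmv hvM _ _ <|
    hgyr.hasApproxCurvature_of_le (t₀ := T / 2) hc₀ hc hv hvM hη.le hε.le hB hu hu₀ hu₀u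
      hvelocity hrate hA.le (by positivity) (by linarith)
  have hsu : s / u ∈ Icc 0 (A / u₀) :=
    ⟨div_nonneg hs.1 (hu₀.trans_le hu₀u).le, div_le_div₀ hA.le hs.2 hu₀ hu₀u⟩
  refine ⟨⟨T / 2 + s / u, ⟨by linarith [hsu.1], by linarith [hsu.2]⟩, ?_⟩, fun s hs =>
    hgyr.half_le_en_and_en_le hv.le (by linarith) hs⟩
  simpa only [ContinuousLinearEquiv.symm_apply_apply] using hmem

end

/-- **Bending lemma for a magnetic field satisfying the bending condition**
(Lemma A.2): all moderately fast trajectories of `v̂⊥𝔟(x) + F` visit the ball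
`B(x₀, r₀/2)` robustly under a small perturbing force `F`, and their speeds stay
comparable to the initial speed. The constants `c₀` and `m̲` depend only on
`𝔟, x₀, r₀`, while `T` and `κ` may also depend on `M̄`. -/
theorem bending_general_field
    (x₀ : V2) (r₀ : ℝ) (hr₀ : 0 < r₀)
    (𝔟 : V2 → ℝ) (h𝔟reg : ContDiff ℝ 1 𝔟) (h𝔟per : Zper 𝔟) (h𝔟bend : Bending 𝔟) :
    ∃ c₀ > (0 : ℝ), ∃ m > (0 : ℝ), ∀ Mb : ℝ, 1 < Mb →
      ∃ T > (0 : ℝ), ∃ κ > (0 : ℝ),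
        ∀ c ≥ c₀, ∀ Force : ℝ → V2 → V2 → V2,
          (∀ t, ∃ Lip : NNReal, LipschitzWith Lip fun z : V2 × V2 => Force t z.1 z.2) →
          (∀ t x v, en (Force t x v) ≤ κ) →
          ∀ x v : V2, m ≤ en v → en v ≤ Mb →
          ∀ X V : ℝ → V2,
            IsRelChar c (fun t y w => 𝔟 y • pperp (vhat c w) + Force t y w) 0 x v X V →
            (∃ t ∈ Set.Ioo (T / 4) (3 * T / 4), X t ∈ ballT2 x₀ (r₀ / 2)) ∧
            (∀ s ∈ Set.Icc (0 : ℝ) T,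
              en v / 2 ≤ en (V s) ∧ en (V s) ≤ 2 * en v) := by
  obtain ⟨m, hm, h⟩ := bending_general_field_general x₀ hr₀ h𝔟reg.continuous
    (exists_forall_abs_le_of_Zper h𝔟reg.continuous h𝔟per) h𝔟bend
  refine ⟨1, one_pos, m, hm, fun Mb hMb => ?_⟩
  obtain ⟨T, hT, κ, hκ, h⟩ := h 1 one_pos Mb (one_pos.trans hMb)
  exact ⟨T, hT, κ, hκ, fun c hc Force _ => h c hc Force⟩

end
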